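/- Let F be a field, H ∈ F^{(n−k)×n} with columns h_0,…,h_{n−1}, C = {c ∈ F^n : Hc = 0} an [n,k] code, N ≥ n, and S = {s_0 < ⋯ < s_{n−1}} ⊆ {0,…,N−1} a placement set with s_0 = 0 and s_{n−1} = N−1; let a ≤ b ≤ τ be positive integers. For each i ∈ {0,…,n−1}, let H^{(i)} = [h_0^{(i)} ⋯ h_{r_i}^{(i)}] be a parity-check matrix of the punctured code C|_{{0,…,r_i}}. Suppose the following hold for every i ∈ {0,…,n−1}: (1) for every A ⊆ {i,…,r_i} with i ∈ A and |A| ≤ a — if r_i < n−1, then h_i^{(i)} ∉ span{h_j^{(i)} : j ∈ A \ {i}}, and if r_i = n−1, then {h_j : j ∈ A} is linearly independent; (2) for every B ⊆ {s_i,…,min(s_i+b−1, N−1)} with s_i ∈ B — if r_i < n−1, then h_i^{(i)} ∉ span{h_j^{(i)} : j ∈ f_S(B) \ {i}}, and if r_i = n−1, then {h_j : j ∈ f_S(B)} is linearly independent. Then SDE(C,S) is an (a,b,τ) streaming code. -/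

import Mathlib

/-!
By linearity, subtract the two streams. If the difference `z` vanishes before time `t` and at the
unerased times of the window, consider the codeword of `C` that carries the symbol `z_i(t)`: its
symbols before position `i` lie in the past, its symbols at positions `i, …, r_i` lie in the
window, and so it vanishes at every position up to `r_i` outside the erased ones. Each parity
check turns this into a linear relation in which the `i`-th column, with coefficient `z_i(t)`, is
balanced by columns at other erased positions only; since the `i`-th column is not in their span,
`z_i(t) = 0`.
-/

section Streams

variable {ι M : Type*} [AddCommGroup M]

/-- The packet streams of `SDE(C, S)`, with the placement set `S` given by its enumeration `σ`.
The base code is only required to be additive. -/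
def sde (C : AddSubgroup (ι → M)) (σ : ι → ℕ) : AddSubgroup (ℤ → ι → M) where
  carrier := {x | ∀ t : ℤ, (fun i => x (t + (σ i : ℤ)) i) ∈ C}
  add_mem' hx hy t := C.add_mem (hx t) (hy t)
  zero_mem' _ := C.zero_mem
  neg_mem' hx t := C.neg_mem (hx t)

/-- The set `X` of packet streams is an `(a, b, τ)` streaming code: the packet at time `t` can be
recovered with delay `τ` from `a` arbitrary erasures or from a burst of length `b`. -/
def IsStreamingCode {P : Type*} (X : Set (ℤ → P)) (a b τ : ℕ) : Prop :=
  ∀ (t : ℤ) (E : Finset ℤ), ↑E ⊆ Set.Icc t (t + (τ : ℤ)) → t ∈ E →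
    (E.card ≤ a ∨ ∀ e ∈ E, e ≤ t + (b : ℤ) - 1) →
    ∀ x y : ℤ → P, x ∈ X → y ∈ X →
      (∀ t' : ℤ, t' < t → x t' = y t') →
      (∀ t' : ℤ, t' ∈ Set.Icc t (t + (τ : ℤ)) → t' ∉ E → x t' = y t') →
      x t = y t

/-- The symbols of a codeword of `C` at the positions in `K` determine its symbol at position `i`.
As `C` is additive, it suffices to compare with the zero codeword. -/
def Determines (C : AddSubgroup (ι → M)) (K : Set ι) (i : ι) : Prop :=
  ∀ c ∈ C, (∀ j ∈ K, c j = 0) → c i = 0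

theorem Determines.mono {C : AddSubgroup (ι → M)} {K L : Set ι} {i : ι} (hK : Determines C K i)
    (hKL : K ⊆ L) : Determines C L i :=
  fun c hc hcL => hK c hc fun j hj => hcL j (hKL hj)

/-- The positions in `P` that are lost to the erased times `E` in the base codeword of an SDE
stream whose position `j` is sent at time `s + σ j`. -/
def erasedPositions (σ : ι → ℕ) (P : Finset ι) (s : ℤ) (E : Finset ℤ) : Finset ι :=
  P.filter fun j => s + (σ j : ℤ) ∈ E

theorem mem_erasedPositions {σ : ι → ℕ} {P : Finset ι} {s : ℤ} {E : Finset ℤ} {j : ι} :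
    j ∈ erasedPositions σ P s E ↔ j ∈ P ∧ s + (σ j : ℤ) ∈ E :=
  Finset.mem_filter

theorem card_erasedPositions_le {σ : ι → ℕ} (hσ : Function.Injective σ) (P : Finset ι) (s : ℤ)
    (E : Finset ℤ) : (erasedPositions σ P s E).card ≤ E.card :=
  Finset.card_le_card_of_injOn (fun j => s + (σ j : ℤ))
    (fun _ hj => (mem_erasedPositions.mp hj).2)
    ((add_right_injective s).comp (Nat.cast_injective.comp hσ)).injOn

theorem apply_eq_zero_of_mem_sde {C : AddSubgroup (ι → M)} {σ : ι → ℕ} {z : ℤ → ι → M}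
    (hz : z ∈ sde C σ) {K : Set ι} {i : ι} (hK : Determines C K i) {t : ℤ}
    (hzK : ∀ j ∈ K, z (t - σ i + σ j) j = 0) : z t i = 0 := by
  simpa only [sub_add_cancel] using hK _ (hz (t - σ i)) hzK

variable [LinearOrder ι] [LocallyFiniteOrder ι]

theorem apply_eq_zero_of_determines_sdiff_erasedPositions {C : AddSubgroup (ι → M)} {σ : ι → ℕ}
    (hσ : StrictMono σ) {τ : ℕ} {i r : ι} (hr : σ r ≤ σ i + τ) {t : ℤ} {E : Finset ℤ}
    (hC : Determines C (Set.Iic r \ erasedPositions σ (Finset.Icc i r) (t - σ i) E) i)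
    {z : ℤ → ι → M} (hz : z ∈ sde C σ) (hpast : ∀ t' : ℤ, t' < t → z t' = 0)
    (hwindow : ∀ t' ∈ Set.Icc t (t + (τ : ℤ)), t' ∉ E → z t' = 0) : z t i = 0 := by
  refine apply_eq_zero_of_mem_sde hz hC fun j ⟨hjr, hjE⟩ => ?_
  rcases lt_or_ge j i with hji | hij
  · have hσji : σ j < σ i := hσ hji
    rw [hpast _ (by omega), Pi.zero_apply]
  · have hσij : σ i ≤ σ j := hσ.monotone hij
    have hσjr : σ j ≤ σ r := hσ.monotone hjr
    have hunerased : t - σ i + σ j ∉ E := fun h =>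
      hjE (mem_erasedPositions.mpr ⟨Finset.mem_Icc.mpr ⟨hij, hjr⟩, h⟩)
    rw [hwindow _ ⟨by omega, by omega⟩ hunerased, Pi.zero_apply]

theorem isStreamingCode_sde_of_determines {C : AddSubgroup (ι → M)} {σ : ι → ℕ}
    (hσ : StrictMono σ) {a b τ : ℕ} {r : ι → ι} (hir : ∀ i, i ≤ r i)
    (hr : ∀ i, σ (r i) ≤ σ i + τ)
    (hC : ∀ (i : ι) (A : Finset ι), A ⊆ Finset.Icc i (r i) → i ∈ A →
      (A.card ≤ a ∨ ∀ j ∈ A, σ j < σ i + b) → Determines C (Set.Iic (r i) \ A) i) :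
    IsStreamingCode (sde C σ : Set (ℤ → ι → M)) a b τ := by
  intro t E _ htE hE x y hx hy hpast hwindow
  funext i
  set A := erasedPositions σ (Finset.Icc i (r i)) (t - σ i) E
  have hiA : i ∈ A :=
    mem_erasedPositions.mpr ⟨Finset.left_mem_Icc.mpr (hir i), by rwa [sub_add_cancel]⟩
  have hA : A.card ≤ a ∨ ∀ j ∈ A, σ j < σ i + b := by
    refine hE.imp (card_erasedPositions_le hσ.injective _ _ _).trans fun hburst j hj => ?_
    have hlast := hburst _ (mem_erasedPositions.mp hj).2
    omega
  refine sub_eq_zero.mp (apply_eq_zero_of_determines_sdiff_erasedPositions (z := x - y) hσ (hr i)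
    (hC i A (Finset.filter_subset _ _) hiA hA) (sub_mem hx hy) ?_ ?_)
  · exact fun t' ht' => sub_eq_zero.mpr (hpast t' ht')
  · exact fun t' ht' ht'E => sub_eq_zero.mpr (hwindow t' ht' ht'E)

end Streams

section ParityChecks

variable {F ι κ m : Type*} [Field F] [Fintype κ]

theorem apply_eq_zero_of_mulVec_eq_zero_of_col_notMem {H : Matrix m κ F} {c : κ → F}
    (hc : H.mulVec c = 0) {V : Submodule F (m → F)} {k : κ} (hk : H.col k ∉ V)
    (hV : ∀ l ≠ k, c l ≠ 0 → H.col l ∈ V) : c k = 0 := by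
  classical
  by_contra hck
  have hrel : c k • H.col k + ∑ l ∈ Finset.univ.erase k, c l • H.col l = 0 := by
    rw [Finset.add_sum_erase _ (fun l => c l • H.col l) (Finset.mem_univ k), ← hc,
      Matrix.mulVec_eq_sum]
    simp only [op_smul_eq_smul, Matrix.col_def]
  have hrest : ∑ l ∈ Finset.univ.erase k, c l • H.col l ∈ V := by
    refine V.sum_mem fun l hl => ?_
    by_cases hcl : c l = 0
    · simp only [hcl, zero_smul, V.zero_mem]
    · exact V.smul_mem _ (hV l (Finset.ne_of_mem_erase hl) hcl)
  apply hk
  rw [← V.smul_mem_iff hck, eq_neg_of_add_eq_zero_left hrel]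
  exact V.neg_mem hrest

theorem determines_of_col_notMem {C : AddSubgroup (ι → F)} {e : κ → ι} {H : Matrix m κ F}
    (hH : ∀ c ∈ C, H.mulVec (c ∘ e) = 0) {K : Set ι} {V : Submodule F (m → F)} {k : κ}
    (hk : H.col k ∉ V) (hV : ∀ l ≠ k, e l ∉ K → H.col l ∈ V) : Determines C K (e k) :=
  fun c hc hcK => apply_eq_zero_of_mulVec_eq_zero_of_col_notMem (hH c hc) hk
    fun l hlk hcl => hV l hlk fun hlK => hcl (hcK _ hlK)

theorem determines_of_punctured_col_notMem_span [DecidableEq ι] {C : AddSubgroup (ι → F)}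
    {e : κ → ι} (he : Function.Injective e) {H : Matrix m κ F}
    (hH : ∀ c ∈ C, H.mulVec (c ∘ e) = 0) {A : Finset ι} {k : κ}
    (hk : H.col k ∉ Submodule.span F {w | ∃ l, e l ∈ A.erase (e k) ∧ w = H.col l}) :
    Determines C (Set.range e \ A) (e k) := by
  refine determines_of_col_notMem hH hk fun l hlk hl => Submodule.subset_span ⟨l, ?_, rfl⟩
  have hlA : e l ∈ A := by simpa using hl
  exact Finset.mem_erase.mpr ⟨he.ne hlk, hlA⟩

theorem determines_of_linearIndepOn_col {C : AddSubgroup (κ → F)} {H : Matrix m κ F}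
    (hH : ∀ c ∈ C, H.mulVec c = 0) {A : Set κ} (hA : LinearIndepOn F H.col A) {i : κ}
    (hi : i ∈ A) : Determines C Aᶜ i :=
  determines_of_col_notMem (e := id) hH (linearIndepOn_iff_notMem_span.mp hA i hi)
    fun _ hli hl => Submodule.subset_span (Set.mem_image_of_mem _ ⟨not_not.mp hl, hli⟩)

end ParityChecks

theorem image_subset_Icc_of_burst {ι : Type*} [Preorder ι] {σ : ι → ℕ} (hσ : Monotone σ)
    {m : ℕ} (hm : ∀ j, σ j ≤ m) {b : ℕ} {i : ι} {A : Finset ι} (hiA : ∀ j ∈ A, i ≤ j)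
    (hburst : ∀ j ∈ A, σ j < σ i + b) :
    A.image σ ⊆ Finset.Icc (σ i) (min (σ i + b - 1) m) :=
  Finset.image_subset_iff.mpr fun j hj => Finset.mem_Icc.mpr
    ⟨hσ (hiA j hj), le_min (Nat.le_sub_one_of_lt (hburst j hj)) (hm j)⟩

/-- Sufficiency of the parity-check-matrix conditions for
SDE(C,S) to be an (a,b,τ) streaming code.  Here `H` is a parity-check matrix
of `C` and, for each `i`, `Hi i` is a parity-check matrix of the punctured
code `C|_{{0,…,r_i}}`. -/
theorem sde_parity_check_sufficient
    (F : Type*) [Field F] (n k N a b τ : ℕ)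
    (hn : 0 < n) (hnN : n ≤ N)
    (ha : 0 < a) (hab : a ≤ b) (hbτ : b ≤ τ)
    (H : Matrix (Fin (n - k)) (Fin n) F)
    (C : Submodule F (Fin n → F))
    (hCH : ∀ c : Fin n → F, c ∈ C ↔ H.mulVec c = 0)
    (hk : Module.finrank F C = k)
    (σ : Fin n → ℕ) (hσmono : StrictMono σ) (hσrange : ∀ i, σ i ≤ N - 1)
    (hσ0 : σ ⟨0, hn⟩ = 0) (hσlast : σ ⟨n - 1, by omega⟩ = N - 1)
    (fS : ℕ → Fin n)
    (hfS : ∀ j : ℕ, σ (fS j) ≤ j ∧ ∀ i : Fin n, σ i ≤ j → i ≤ fS j)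
    (r : Fin n → Fin n)
    (hr : ∀ i, r i = fS (min (σ i + τ) (N - 1)))
    (mi : Fin n → ℕ)
    (Hi : (i : Fin n) → Matrix (Fin (mi i)) (Fin ((r i : ℕ) + 1)) F)
    (hHi : ∀ i : Fin n, ∀ y : Fin ((r i : ℕ) + 1) → F,
        (Hi i).mulVec y = 0 ↔
          ∃ c ∈ C, ∀ j : Fin ((r i : ℕ) + 1), y j = c (Fin.castLE (r i).isLt j))
    -- (1) random erasure recovery conditions on the p-c matrices
    (h1 : ∀ (i : Fin n) (A : Finset (Fin n)),
        A ⊆ Finset.Icc i (r i) → i ∈ A → A.card ≤ a →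
        (((r i : ℕ) < n - 1 →
          ∀ hii : (i : ℕ) ≤ (r i : ℕ),
            (fun u => Hi i u ⟨(i : ℕ), by omega⟩) ∉
              Submodule.span F
                {w | ∃ j : Fin ((r i : ℕ) + 1),
                    Fin.castLE (r i).isLt j ∈ A.erase i ∧ w = fun u => Hi i u j}) ∧
         ((r i : ℕ) = n - 1 →
          LinearIndependent F (fun j : A => fun u => H u (j : Fin n)))))
    -- (2) burst erasure recovery conditions on the p-c matrices
    (h2 : ∀ (i : Fin n) (B : Finset ℕ),
        B ⊆ Finset.Icc (σ i) (min (σ i + b - 1) (N - 1)) → σ i ∈ B →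
        (((r i : ℕ) < n - 1 →
          ∀ hii : (i : ℕ) ≤ (r i : ℕ),
            (fun u => Hi i u ⟨(i : ℕ), by omega⟩) ∉
              Submodule.span F
                {w | ∃ j : Fin ((r i : ℕ) + 1),
                    Fin.castLE (r i).isLt j ∈ (B.image fS).erase i ∧
                      w = fun u => Hi i u j}) ∧
         ((r i : ℕ) = n - 1 →
          LinearIndependent F
            (fun j : (B.image fS : Finset (Fin n)) => fun u => H u (j : Fin n))))) :
    -- SDE(C,S) is an (a,b,τ) streaming code
    ∀ (t : ℤ) (E : Finset ℤ), (↑E ⊆ Set.Icc t (t + (τ : ℤ))) → t ∈ E →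
      (E.card ≤ a ∨ ∀ e ∈ E, e ≤ t + (b : ℤ) - 1) →
      ∀ x y : ℤ → Fin n → F,
        (∀ s : ℤ, (fun i => x (s + (σ i : ℤ)) i) ∈ C) →
        (∀ s : ℤ, (fun i => y (s + (σ i : ℤ)) i) ∈ C) →
        (∀ t' : ℤ, t' < t → x t' = y t') →
        (∀ t' : ℤ, t' ∈ Set.Icc t (t + (τ : ℤ)) → t' ∉ E → x t' = y t') →
        x t = y t := by
  have gc : GaloisConnection σ fS := fun i j =>
    ⟨(hfS j).2 i, fun h => (hσmono.monotone h).trans (hfS j).1⟩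
  have hfSσ : Function.LeftInverse fS σ := fun i => hσmono.injective (gc.l_u_l_eq_l i)
  have hir : ∀ i, i ≤ r i := fun i =>
    (gc.le_u (le_min (Nat.le_add_right _ _) (hσrange i))).trans_eq (hr i).symm
  have hrτ : ∀ i, σ (r i) ≤ σ i + τ := fun i => (gc.l_le (hr i).le).trans (min_le_left _ _)
  refine isStreamingCode_sde_of_determines (C := C.toAddSubgroup) hσmono hir hrτ
    fun i A hAr hiA hA => ?_
  have hcols := hA.elim (h1 i A hAr hiA) fun hburst => by
    have hB := image_subset_Icc_of_burst hσmono.monotone hσrange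
      (fun j hj => (Finset.mem_Icc.mp (hAr hj)).1) hburst
    have hfSB : (A.image σ).image fS = A := by
      rw [Finset.image_image, hfSσ.comp_eq_id, Finset.image_id]
    exact hfSB ▸ h2 i (A.image σ) hB (Finset.mem_image_of_mem σ hiA)
  rcases (Nat.le_sub_one_of_lt (r i).isLt).lt_or_eq with hlt | hlast
  · refine (determines_of_punctured_col_notMem_span (k := ⟨i, Nat.lt_succ_of_le (hir i)⟩)
      (Fin.castLE_injective (r i).isLt) (fun c hc => (hHi i _).mpr ⟨c, hc, fun _ => rfl⟩)
      (hcols.1 hlt (hir i))).mono (Set.sdiff_subset_sdiff_left ?_)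
    exact Set.range_subset_iff.mpr fun l => Nat.le_of_lt_succ l.isLt
  · exact (determines_of_linearIndepOn_col (fun c hc => (hCH c).mp hc) (hcols.2 hlast) hiA).mono
      fun l hlA => ⟨Fin.le_def.mpr (by omega), hlA⟩
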